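/- arXiv:2203.10329 — 2 statements merged into one kernel-verified Lean document; each statement's English description precedes it below -/
import Mathlib

section
/- Let f : ℝ^d → ℝ be L-smooth, let μ > 0, and let f_μ(x) = E_v[f(x + μ v)] be its uniform smoothing over the unit ball. Then for every x ∈ ℝ^d, ∇f_μ(x) = E_u[ (d/μ)(f(x + μ u) − f(x)) · u ], where u is drawn uniformly from the unit sphere of ℝ^d. -/
open MeasureTheory ProbabilityTheory

/-- The uniform distribution on the closed unit ball of `ℝ^d`. -/
noncomputable def uniformBall (d : ℕ) : Measure (EuclideanSpace ℝ (Fin d)) :=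
  (volume (Metric.closedBall (0 : EuclideanSpace ℝ (Fin d)) 1))⁻¹ •
    volume.restrict (Metric.closedBall (0 : EuclideanSpace ℝ (Fin d)) 1)

/-- The uniform distribution on the unit sphere of `ℝ^d`, viewed as a measure on `ℝ^d`. -/
noncomputable def uniformSphere (d : ℕ) : Measure (EuclideanSpace ℝ (Fin d)) :=
  ((volume : Measure (EuclideanSpace ℝ (Fin d))).toSphere Set.univ)⁻¹ •
    Measure.map Subtype.val (volume : Measure (EuclideanSpace ℝ (Fin d))).toSphere

/-!
In polar coordinates around a *fixed* origin, the unit ball centred at `h` is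
`{r • u | r ≤ exitRadius h u}`, so moving the ball only moves the upper limit of the radial
integrals. At `h = 0` that limit is `1` and its derivative in `h` is `⟪u, ·⟫`; differentiating under
the integral over the sphere gives the gradient of the ball integral as `∫ f(u) u` over the sphere,
for every continuous `f`. Applied to a constant function this shows that the sphere has mean zero,
which is why `f x` may be subtracted in the estimator.
-/

open Set Metric Module
open scoped InnerProductSpace

section PolarCoordinates

variable {E F : Type*} [NormedAddCommGroup E] [NormedSpace ℝ E] [FiniteDimensional ℝ E]
  [MeasurableSpace E] [BorelSpace E] [NormedAddCommGroup F]

theorem integrable_toSphere_of_continuous (ν : Measure E) [ν.IsAddHaarMeasure]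
    {g : sphere (0 : E) 1 → F} (hg : Continuous g) :
    Integrable g ν.toSphere :=
  hg.integrable_of_hasCompactSupport (.of_compactSpace g)

variable [NormedSpace ℝ F]

theorem integral_volumeIoiPow (n : ℕ) (g : ℝ → F) :
    ∫ r, g r ∂(Measure.volumeIoiPow n) = ∫ r in Ioi (0 : ℝ), r ^ n • g r := by
  rw [← integral_subtype_comap measurableSet_Ioi, Measure.volumeIoiPow,
    integral_withDensity_eq_integral_toReal_smul (by fun_prop) (by simp)]
  refine integral_congr_ae (.of_forall fun r ↦ ?_)
  simp only [ENNReal.toReal_ofReal (pow_nonneg r.2.out.le n)]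

theorem integral_eq_integral_toSphere_integral_Ioi [Nontrivial E] (ν : Measure E)
    [ν.IsAddHaarMeasure] {g : E → F} (hg : Integrable g ν) :
    ∫ v, g v ∂ν =
      ∫ u, (∫ r in Ioi (0 : ℝ), r ^ (finrank ℝ E - 1) • g (r • (u : E))) ∂ν.toSphere := by
  have polar := ν.measurePreserving_homeomorphUnitSphereProd
  have polar_emb := (homeomorphUnitSphereProd E).measurableEmbedding
  have measurableSet_compl_zero : MeasurableSet ({0}ᶜ : Set E) := (measurableSet_singleton 0).compl
  let G : sphere (0 : E) 1 × Ioi (0 : ℝ) → F := fun p ↦ g (p.2.1 • p.1.1)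
  have G_polar : (fun v ↦ G (homeomorphUnitSphereProd E v)) = fun v : ({0}ᶜ : Set E) ↦ g v := by
    ext v
    exact congrArg (g ∘ Subtype.val) ((homeomorphUnitSphereProd E).symm_apply_apply v)
  have integrable_G : Integrable G (ν.toSphere.prod (.volumeIoiPow (finrank ℝ E - 1))) := by
    rw [← polar.integrable_comp_emb polar_emb]
    exact .congr ((integrableOn_iff_comap_subtypeVal measurableSet_compl_zero).1 hg.integrableOn)
      (.of_forall (congrFun G_polar.symm))
  calc ∫ v, g v ∂ν
      = ∫ v : ({0}ᶜ : Set E), g v ∂(ν.comap (↑)) := by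
        rw [integral_subtype_comap measurableSet_compl_zero, restrict_compl_singleton]
    _ = ∫ p, G p ∂(ν.toSphere.prod (.volumeIoiPow (finrank ℝ E - 1))) := by
        rw [← G_polar, polar.integral_comp polar_emb]
    _ = ∫ u, ∫ r, G (u, r) ∂(Measure.volumeIoiPow (finrank ℝ E - 1)) ∂ν.toSphere :=
        integral_prod _ integrable_G
    _ = _ := by
        congr 1 with u
        exact integral_volumeIoiPow _ fun r ↦ g (r • (u : E))

end PolarCoordinates

section Translation

variable {E F : Type*} [NormedAddCommGroup E] [NormedSpace ℝ E] [MeasurableSpace E] [BorelSpace E]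
  [NormedAddCommGroup F] [NormedSpace ℝ F]

theorem setIntegral_closedBall_add_smul (ν : Measure E) [ν.IsAddRightInvariant] (f : E → F)
    {μ : ℝ} (hμ : μ ≠ 0) (R : ℝ) (x y : E) :
    ∫ v in closedBall (0 : E) R, f (y + μ • v) ∂ν =
      ∫ v in closedBall (μ⁻¹ • (y - x)) R, f (x + μ • v) ∂ν := by
  have shift := (measurePreserving_add_right ν (μ⁻¹ • (y - x))).setIntegral_preimage_emb
    (measurableEmbedding_addRight _) (fun v ↦ f (x + μ • v)) (closedBall (μ⁻¹ • (y - x)) R)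
  rw [← shift, preimage_add_right_closedBall, sub_self]
  congr with v
  rw [smul_add, smul_inv_smul₀ hμ, add_left_comm, add_sub_cancel, add_comm]

end Translation

section ExitRadius

variable {E : Type*} [NormedAddCommGroup E] [InnerProductSpace ℝ E] {h u : E}

/-- The length of the ray from the origin in the unit direction `u` inside the unit ball centred
at `h`, for `‖h‖ < 1`: the larger root `r` of `‖r • u - h‖ ^ 2 = 1`. It describes the translated
ball in polar coordinates around the fixed origin. -/
noncomputable def exitRadius (h u : E) : ℝ := ⟪u, h⟫_ℝ + √(1 - ‖h‖ ^ 2 + ⟪u, h⟫_ℝ ^ 2)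

theorem continuous_exitRadius (h : E) : Continuous (exitRadius h) := by
  unfold exitRadius
  fun_prop

theorem exitRadius_zero (u : E) : exitRadius 0 u = 1 := by simp [exitRadius]

theorem norm_smul_sub_sq_of_norm_eq_one (hu : ‖u‖ = 1) (h : E) (r : ℝ) :
    ‖r • u - h‖ ^ 2 = (r - ⟪u, h⟫_ℝ) ^ 2 + ‖h‖ ^ 2 - ⟪u, h⟫_ℝ ^ 2 := by
  rw [norm_sub_sq_real, norm_smul, hu, real_inner_smul_left, Real.norm_eq_abs, mul_one, sq_abs]
  ring

theorem abs_inner_lt_sqrt_discrim (hh : ‖h‖ < 1) (u : E) :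
    |⟪u, h⟫_ℝ| < √(1 - ‖h‖ ^ 2 + ⟪u, h⟫_ℝ ^ 2) := by
  refine Real.lt_sqrt_of_sq_lt ?_
  rw [sq_abs]
  nlinarith [norm_nonneg h]

theorem exitRadius_pos (hh : ‖h‖ < 1) (u : E) : 0 < exitRadius h u := by
  rw [exitRadius]
  linarith [neg_lt_of_abs_lt (abs_inner_lt_sqrt_discrim hh u)]

theorem smul_mem_closedBall_iff_le_exitRadius (hh : ‖h‖ < 1) (hu : ‖u‖ = 1) {r : ℝ}
    (hr : 0 < r) : r • u ∈ closedBall h 1 ↔ r ≤ exitRadius h u := by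
  have neg_sqrt_lt : -√(1 - ‖h‖ ^ 2 + ⟪u, h⟫_ℝ ^ 2) < r - ⟪u, h⟫_ℝ := by
    linarith [lt_of_abs_lt (abs_inner_lt_sqrt_discrim hh u)]
  calc r • u ∈ closedBall h 1
      ↔ ‖r • u - h‖ ^ 2 ≤ 1 := by
        rw [mem_closedBall_iff_norm, sq_le_one_iff₀ (norm_nonneg _)]
    _ ↔ (r - ⟪u, h⟫_ℝ) ^ 2 ≤ 1 - ‖h‖ ^ 2 + ⟪u, h⟫_ℝ ^ 2 := by
        rw [norm_smul_sub_sq_of_norm_eq_one hu]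
        constructor <;> intro _ <;> linarith
    _ ↔ r ≤ exitRadius h u := by
        rw [Real.sq_le (by nlinarith [norm_nonneg h]), and_iff_right neg_sqrt_lt.le,
          sub_le_iff_le_add', exitRadius]

theorem norm_exitRadius_smul_sub (hh : ‖h‖ < 1) (hu : ‖u‖ = 1) :
    ‖exitRadius h u • u - h‖ = 1 := by
  have discrim_nonneg : 0 ≤ 1 - ‖h‖ ^ 2 + ⟪u, h⟫_ℝ ^ 2 := by nlinarith [norm_nonneg h]
  rw [← pow_eq_one_iff_of_nonneg (norm_nonneg _) two_ne_zero,
    norm_smul_sub_sq_of_norm_eq_one hu, exitRadius, add_sub_cancel_left,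
    Real.sq_sqrt discrim_nonneg]
  ring

theorem abs_exitRadius_sub_one_le (hh : ‖h‖ < 1) (hu : ‖u‖ = 1) :
    |exitRadius h u - 1| ≤ ‖h‖ := by
  have norm_exit : ‖exitRadius h u • u‖ = exitRadius h u := by
    rw [norm_smul, hu, mul_one, Real.norm_of_nonneg (exitRadius_pos hh u).le]
  calc |exitRadius h u - 1|
      = |‖exitRadius h u • u‖ - ‖exitRadius h u • u - h‖| := by
        rw [norm_exit, norm_exitRadius_smul_sub hh hu]
    _ ≤ ‖exitRadius h u • u - (exitRadius h u • u - h)‖ := abs_norm_sub_norm_le _ _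
    _ = ‖h‖ := by rw [sub_sub_cancel]

theorem hasFDerivAt_exitRadius_zero (u : E) :
    HasFDerivAt (fun h ↦ exitRadius h u) (innerSL ℝ u) 0 := by
  have inner_deriv : HasFDerivAt (fun h ↦ ⟪u, h⟫_ℝ) (innerSL ℝ u) 0 := (innerSL ℝ u).hasFDerivAt
  have norm_sq_deriv := (hasStrictFDerivAt_norm_sq (0 : E)).hasFDerivAt
  have sqrt_deriv := ((norm_sq_deriv.const_sub 1).add (inner_deriv.pow 2)).sqrt (by simp)
  refine (inner_deriv.add sqrt_deriv).congr_fderiv ?_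
  ext; simp

variable {F : Type*} [NormedAddCommGroup F] [NormedSpace ℝ F] {g : ℝ → F}

theorem norm_intervalIntegral_exitRadius_sub_le (hg : Continuous g) {C : ℝ}
    (norm_g_le : ∀ r ∈ Icc (0 : ℝ) 2, ‖g r‖ ≤ C) (hh : ‖h‖ < 1) (hu : ‖u‖ = 1) :
    ‖(∫ r in (0 : ℝ)..exitRadius h u, g r) - ∫ r in (0 : ℝ)..exitRadius 0 u, g r‖ ≤ C * ‖h‖ := by
  have radius_near_one := abs_exitRadius_sub_one_le hh hu
  obtain ⟨radius_ge, radius_le⟩ := abs_le.1 (radius_near_one.trans hh.le)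
  have radii_subset : uIoc 1 (exitRadius h u) ⊆ Icc 0 2 := uIoc_subset_uIcc.trans <|
    uIcc_subset_Icc (by norm_num) ⟨by linarith, by linarith⟩
  have C_nonneg : 0 ≤ C := (norm_nonneg _).trans (norm_g_le 0 (by norm_num))
  rw [exitRadius_zero, intervalIntegral.integral_interval_sub_left
    (hg.intervalIntegrable ..) (hg.intervalIntegrable ..)]
  calc ‖∫ r in (1 : ℝ)..exitRadius h u, g r‖
      ≤ C * |exitRadius h u - 1| :=
        intervalIntegral.norm_integral_le_of_norm_le_const fun r hr ↦ norm_g_le r (radii_subset hr)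
    _ ≤ C * ‖h‖ := by gcongr

theorem hasFDerivAt_intervalIntegral_exitRadius_zero [CompleteSpace F] (hg : Continuous g) (u : E) :
    HasFDerivAt (fun h ↦ ∫ r in (0 : ℝ)..exitRadius h u, g r)
      ((innerSL ℝ u).smulRight (g 1)) 0 := by
  have primitive_deriv := (hg.integral_hasStrictDerivAt 0 (exitRadius 0 u)).hasDerivAt
  have radial_deriv := primitive_deriv.hasFDerivAt.comp (0 : E) (hasFDerivAt_exitRadius_zero u)
  rw [exitRadius_zero] at radial_deriv
  exact radial_deriv.congr_fderiv (by ext; simp)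

end ExitRadius

section BallIntegral

theorem continuous_innerSL_smulRight {X E F : Type*} [TopologicalSpace X] [NormedAddCommGroup E]
    [InnerProductSpace ℝ E] [NormedAddCommGroup F] [NormedSpace ℝ F] {φ : X → E} {g : X → F}
    (hφ : Continuous φ) (hg : Continuous g) :
    Continuous fun t ↦ (innerSL ℝ (φ t)).smulRight (g t) :=
  isBoundedBilinearMap_smulRight.continuous.comp₂ (by fun_prop) hg

variable {E F : Type*} [NormedAddCommGroup E] [InnerProductSpace ℝ E] [FiniteDimensional ℝ E]
  [MeasurableSpace E] [BorelSpace E] [NormedAddCommGroup F] [NormedSpace ℝ F]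
  (ν : Measure E) [ν.IsAddHaarMeasure] {f : E → F}

theorem integral_toSphere_innerSL_smulRight {g : sphere (0 : E) 1 → ℝ} (hg : Continuous g) :
    ∫ u, (innerSL ℝ (u : E)).smulRight (g u) ∂ν.toSphere =
      InnerProductSpace.toDual ℝ E (∫ u, g u • (u : E) ∂ν.toSphere) := by
  have integrable_smulRight := integrable_toSphere_of_continuous ν
    (continuous_innerSL_smulRight continuous_subtype_val hg)
  have integrable_smul := integrable_toSphere_of_continuous ν (hg.fun_smul continuous_subtype_val)
  ext e
  rw [ContinuousLinearMap.integral_apply integrable_smulRight,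
    InnerProductSpace.toDual_apply_apply, real_inner_comm, ← integral_inner integrable_smul]
  congr with u
  rw [ContinuousLinearMap.smulRight_apply, innerSL_apply_apply, smul_eq_mul, real_inner_smul_right,
    real_inner_comm, mul_comm]

theorem setIntegral_closedBall_eq_integral_toSphere_exitRadius [Nontrivial E] {h : E}
    (hh : ‖h‖ < 1) (hf : Continuous f) :
    ∫ v in closedBall h 1, f v ∂ν =
      ∫ u, (∫ r in (0 : ℝ)..exitRadius h u, r ^ (finrank ℝ E - 1) • f (r • (u : E)))
        ∂ν.toSphere := by
  have integrable_indicator : Integrable ((closedBall h 1).indicator f) ν :=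
    (hf.locallyIntegrable.integrableOn_isCompact (isCompact_closedBall h 1)).integrable_indicator
      measurableSet_closedBall
  rw [← integral_indicator measurableSet_closedBall,
    integral_eq_integral_toSphere_integral_Ioi ν integrable_indicator]
  congr 1 with u
  have radial_indicator : EqOn
      (fun r : ℝ ↦ r ^ (finrank ℝ E - 1) • (closedBall h 1).indicator f (r • (u : E)))
      ((Iic (exitRadius h u)).indicator fun r ↦ r ^ (finrank ℝ E - 1) • f (r • (u : E)))
      (Ioi 0) := fun r hr ↦ by
    simp only [indicator, mem_Iic,
      smul_mem_closedBall_iff_le_exitRadius hh (norm_eq_of_mem_sphere u) hr, smul_ite, smul_zero]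
  rw [setIntegral_congr_fun measurableSet_Ioi radial_indicator,
    setIntegral_indicator measurableSet_Iic, Ioi_inter_Iic,
    intervalIntegral.integral_of_le (exitRadius_pos hh _).le]

theorem hasFDerivAt_integral_toSphere_intervalIntegral_exitRadius [CompleteSpace F]
    {w : sphere (0 : E) 1 → ℝ → F} (hw : Continuous (Function.uncurry w)) :
    HasFDerivAt (fun h : E ↦ ∫ u, (∫ r in (0 : ℝ)..exitRadius h (u : E), w u r) ∂ν.toSphere)
      (∫ u, (innerSL ℝ (u : E)).smulRight (w u 1) ∂ν.toSphere) 0 := by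
  obtain ⟨C, norm_w_le⟩ := ((isCompact_univ (X := sphere (0 : E) 1)).prod
    (isCompact_Icc (a := (0 : ℝ)) (b := 2))).exists_bound_of_continuousOn hw.continuousOn
  have continuous_radial (h : E) :
      Continuous fun u : sphere (0 : E) 1 ↦ ∫ r in (0 : ℝ)..exitRadius h u, w u r :=
    intervalIntegral.continuous_parametric_intervalIntegral_of_continuous hw
      ((continuous_exitRadius h).comp continuous_subtype_val)
  have continuous_deriv :
      Continuous fun u : sphere (0 : E) 1 ↦ (innerSL ℝ (u : E)).smulRight (w u 1) :=
    continuous_innerSL_smulRight continuous_subtype_val (by fun_prop)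
  exact (hasFDerivAt_integral_of_dominated_loc_of_lip' (bound := fun _ ↦ C)
    (ball_mem_nhds 0 one_pos)
    (fun h _ ↦ (continuous_radial h).aestronglyMeasurable)
    (integrable_toSphere_of_continuous ν (continuous_radial 0))
    continuous_deriv.aestronglyMeasurable
    (.of_forall fun u h hh ↦ by
      simpa only [sub_zero] using norm_intervalIntegral_exitRadius_sub_le (hw.uncurry_left u)
        (fun r hr ↦ norm_w_le (u, r) ⟨mem_univ u, hr⟩) (mem_ball_zero_iff.1 hh)
        (norm_eq_of_mem_sphere u))
    (integrable_const C)
    (.of_forall fun u ↦ hasFDerivAt_intervalIntegral_exitRadius_zero (hw.uncurry_left u) (u : E))).2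

variable [CompleteSpace F]

theorem hasFDerivAt_setIntegral_closedBall_zero (hf : Continuous f) :
    HasFDerivAt (fun h ↦ ∫ v in closedBall h 1, f v ∂ν)
      (∫ u, (innerSL ℝ (u : E)).smulRight (f u) ∂ν.toSphere) 0 := by
  cases subsingleton_or_nontrivial E
  · exact (hasFDerivAt_of_subsingleton _ 0).congr_fderiv (Subsingleton.elim _ _)
  have polar_deriv := hasFDerivAt_integral_toSphere_intervalIntegral_exitRadius ν
    (w := fun u r ↦ r ^ (finrank ℝ E - 1) • f (r • (u : E))) (by fun_prop)
  simp only [one_pow, one_smul] at polar_deriv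
  refine polar_deriv.congr_of_eventuallyEq ?_
  filter_upwards [ball_mem_nhds (0 : E) one_pos] with h hh
  exact setIntegral_closedBall_eq_integral_toSphere_exitRadius ν (mem_ball_zero_iff.1 hh) hf

theorem hasFDerivAt_setIntegral_closedBall_add_smul (hf : Continuous f) {μ : ℝ} (hμ : μ ≠ 0)
    (x : E) :
    HasFDerivAt (fun y ↦ ∫ v in closedBall (0 : E) 1, f (y + μ • v) ∂ν)
      (μ⁻¹ • ∫ u, (innerSL ℝ (u : E)).smulRight (f (x + μ • (u : E))) ∂ν.toSphere) x := by
  have recenter : (fun y ↦ ∫ v in closedBall (0 : E) 1, f (y + μ • v) ∂ν) =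
      (fun h ↦ ∫ v in closedBall h 1, f (x + μ • v) ∂ν) ∘ fun y ↦ μ⁻¹ • (y - x) :=
    funext (setIntegral_closedBall_add_smul ν f hμ 1 x)
  have shift_deriv : HasFDerivAt (fun y : E ↦ μ⁻¹ • (y - x)) (μ⁻¹ • .id ℝ E) x :=
    ((hasFDerivAt_id x).sub_const x).const_smul μ⁻¹
  have ball_deriv : HasFDerivAt (fun h ↦ ∫ v in closedBall h 1, f (x + μ • v) ∂ν)
      (∫ u, (innerSL ℝ (u : E)).smulRight (f (x + μ • (u : E))) ∂ν.toSphere) (μ⁻¹ • (x - x)) := by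
    rw [sub_self, smul_zero]
    exact hasFDerivAt_setIntegral_closedBall_zero ν (by fun_prop)
  rw [recenter]
  refine (ball_deriv.comp x shift_deriv).congr_fderiv ?_
  rw [ContinuousLinearMap.comp_smul, ContinuousLinearMap.comp_id]

theorem hasGradientAt_setIntegral_closedBall_add_smul {f : E → ℝ} (hf : Continuous f) {μ : ℝ}
    (hμ : μ ≠ 0) (x : E) :
    HasGradientAt (fun y ↦ ∫ v in closedBall (0 : E) 1, f (y + μ • v) ∂ν)
      (μ⁻¹ • ∫ u, f (x + μ • (u : E)) • (u : E) ∂ν.toSphere) x := by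
  refine (hasFDerivAt_setIntegral_closedBall_add_smul ν hf hμ x).congr_fderiv ?_
  rw [integral_toSphere_innerSL_smulRight ν (by fun_prop), ← map_smul]

theorem integral_coe_toSphere : ∫ u, (u : E) ∂ν.toSphere = 0 := by
  have gradient_const := (hasGradientAt_setIntegral_closedBall_add_smul ν
    (continuous_const (y := (1 : ℝ))) one_ne_zero (0 : E)).unique (hasGradientAt_const _ _)
  simpa only [inv_one, one_smul] using gradient_const

theorem integral_mul_sub_smul_coe_toSphere {g : sphere (0 : E) 1 → ℝ} (hg : Continuous g)
    (a b : ℝ) :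
    ∫ u, (a * (g u - b)) • (u : E) ∂ν.toSphere = a • ∫ u, g u • (u : E) ∂ν.toSphere := by
  simp_rw [mul_smul, sub_smul]
  rw [integral_smul, integral_sub (integrable_toSphere_of_continuous ν (by fun_prop))
    (integrable_toSphere_of_continuous ν (by fun_prop)), integral_smul, integral_coe_toSphere,
    smul_zero, sub_zero]

end BallIntegral

theorem uniform_smoothing_unbiased_estimator_general {E : Type*} [NormedAddCommGroup E]
    [InnerProductSpace ℝ E] [FiniteDimensional ℝ E] [MeasurableSpace E] [BorelSpace E]
    (ν : Measure E) [ν.IsAddHaarMeasure] {f : E → ℝ} (hf : Continuous f) {μ : ℝ} (hμ : μ ≠ 0)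
    (x : E) :
    HasGradientAt (fun y ↦ ⨍ v in closedBall (0 : E) 1, f (y + μ • v) ∂ν)
      (⨍ u, (finrank ℝ E / μ * (f (x + μ • (u : E)) - f x)) • (u : E) ∂ν.toSphere) x := by
  cases subsingleton_or_nontrivial E
  · exact (hasFDerivAt_of_subsingleton _ x).congr_fderiv (Subsingleton.elim _ _)
  have finrank_ne_zero : (finrank ℝ E : ℝ) ≠ 0 := mod_cast finrank_pos.ne'
  simp only [average_eq, measureReal_restrict_apply_univ, Measure.toSphere_real_apply_univ,
    Measure.addHaar_real_closedBall_eq_addHaar_real_ball]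
  rw [integral_mul_sub_smul_coe_toSphere ν (by fun_prop)]
  refine ((hasGradientAt_setIntegral_closedBall_add_smul ν hf hμ x).hasFDerivAt.const_smul
    (ν.real (ball 0 1))⁻¹).congr_fderiv ?_
  rw [← map_smul, smul_smul, smul_smul]
  congr 2
  field_simp

section UniformDistributions

variable {F : Type*} [NormedAddCommGroup F] [NormedSpace ℝ F] {d : ℕ}
  (g : EuclideanSpace ℝ (Fin d) → F)

theorem integral_uniformBall :
    ∫ v, g v ∂(uniformBall d) = ⨍ v in closedBall (0 : EuclideanSpace ℝ (Fin d)) 1, g v := by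
  rw [uniformBall, average, Measure.restrict_apply_univ]

theorem integral_uniformSphere :
    ∫ u, g u ∂(uniformSphere d) =
      ⨍ u, g u ∂(volume : Measure (EuclideanSpace ℝ (Fin d))).toSphere := by
  rw [uniformSphere, average, ← Measure.map_smul,
    (MeasurableEmbedding.subtype_coe isClosed_sphere.measurableSet).integral_map]

end UniformDistributions

/-- The two-point uniform (spherical) gradient estimator is an unbiased estimate of the gradient
of the uniform smoothing `f_μ` over the unit ball. -/
theorem uniform_smoothing_unbiased_estimator
    (d : ℕ) (L μ : ℝ) (hμ : 0 < μ)
    (f : EuclideanSpace ℝ (Fin d) → ℝ)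
    (hdiff : Differentiable ℝ f)
    (hlip : ∀ x y, ‖gradient f x - gradient f y‖ ≤ L * ‖x - y‖)
    (fμ : EuclideanSpace ℝ (Fin d) → ℝ)
    (hfμ : ∀ x, fμ x = ∫ v, f (x + μ • v) ∂(uniformBall d))
    (x : EuclideanSpace ℝ (Fin d)) :
    gradient fμ x = ∫ u, (((d : ℝ) / μ) * (f (x + μ • u) - f x)) • u ∂(uniformSphere d) := by
  obtain rfl : fμ = _ := funext fun y ↦ (hfμ y).trans (integral_uniformBall _)
  simpa only [integral_uniformSphere, finrank_euclideanSpace_fin] using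
    (uniform_smoothing_unbiased_estimator_general volume hdiff.continuous hμ.ne' x).gradient
end

section
/- Let f : ℝ^d → ℝ be L-smooth, let μ > 0, and let f_μ(x) = E_v[f(x + μ v)] be its uniform smoothing over the unit ball. Then f_μ is differentiable and L-smooth, i.e., ‖∇f_μ(x) − ∇f_μ(y)‖ ≤ L‖x − y‖ for all x, y ∈ ℝ^d. -/
open MeasureTheory ProbabilityTheory

/-!
Smoothing replaces `f` by the average of its translates `x ↦ f (x + X ω)`. A Lipschitz derivative
moves by a bounded amount over a unit ball, so `‖fderiv ℝ f (x + X ω)‖ + K` dominates the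
derivatives of all translates near `x`, and one may differentiate under the integral. The
derivative of the smoothing is then the average of translates of `fderiv ℝ f`, and averaging
translates with respect to a probability measure preserves every Lipschitz bound.
-/

section RandomTranslate

variable {Ω E F : Type*} [MeasurableSpace Ω] {P : Measure Ω} [NormedAddCommGroup E]
  [NormedAddCommGroup F] {X : Ω → E} {K : NNReal} {L : ℝ}

theorem lipschitzWith_toNNReal_of_norm_sub_le {g : E → F}
    (hg : ∀ x y, ‖g x - g y‖ ≤ L * ‖x - y‖) : LipschitzWith L.toNNReal g :=
  .of_dist_le' fun x y => by simpa only [dist_eq_norm] using hg x y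

theorem norm_apply_add_le_of_lipschitzWith {g : E → F} (hg : LipschitzWith K g) (x y : E) :
    ‖g (x + y)‖ ≤ ‖g y‖ + K * ‖x‖ := by
  have hdist : ‖g (x + y) - g y‖ ≤ K * ‖x‖ := by simpa using hg.norm_sub_le (x + y) y
  linarith [norm_le_norm_add_norm_sub' (g (x + y)) (g y)]

theorem integrable_comp_add_of_lipschitzWith [IsFiniteMeasure P] {g : E → F}
    (hg : LipschitzWith K g) (hX : AEStronglyMeasurable X P)
    (hgX : Integrable (fun ω => g (X ω)) P) (x : E) :
    Integrable (fun ω => g (x + X ω)) P :=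
  (hgX.norm.add (integrable_const (K * ‖x‖))).mono'
    (hg.continuous.comp_aestronglyMeasurable (hX.const_add x))
    (.of_forall fun ω => norm_apply_add_le_of_lipschitzWith hg x (X ω))

theorem norm_integral_comp_add_sub_le [IsProbabilityMeasure P] [NormedSpace ℝ F] {g : E → F}
    (hg : ∀ x y, ‖g x - g y‖ ≤ L * ‖x - y‖)
    (hgX : ∀ x, Integrable (fun ω => g (x + X ω)) P) (x y : E) :
    ‖(∫ ω, g (x + X ω) ∂P) - ∫ ω, g (y + X ω) ∂P‖ ≤ L * ‖x - y‖ := by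
  have hpointwise (ω : Ω) : ‖g (x + X ω) - g (y + X ω)‖ ≤ L * ‖x - y‖ := by
    simpa only [add_sub_add_right_eq_sub] using hg (x + X ω) (y + X ω)
  rw [← integral_sub (hgX x) (hgX y)]
  simpa using norm_integral_le_of_norm_le_const (μ := P) (.of_forall hpointwise)

variable [NormedSpace ℝ E] [NormedSpace ℝ F] {f : E → F}

theorem norm_apply_add_sub_le_of_lipschitzWith_fderiv (hf : Differentiable ℝ f)
    (hf' : LipschitzWith K (fderiv ℝ f)) (x y : E) :
    ‖f (x + y) - f y‖ ≤ (‖fderiv ℝ f y‖ + K * ‖x‖) * ‖x‖ := by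
  have hbound (z : E) (hz : z ∈ Metric.closedBall y ‖x‖) :
      ‖fderiv ℝ f z‖ ≤ ‖fderiv ℝ f y‖ + K * ‖x‖ := by
    have hzy : ‖fderiv ℝ f z‖ ≤ ‖fderiv ℝ f y‖ + K * ‖z - y‖ := by
      simpa using norm_apply_add_le_of_lipschitzWith hf' (z - y) y
    exact hzy.trans (by gcongr; exact mem_closedBall_iff_norm.1 hz)
  simpa using (convex_closedBall y ‖x‖).norm_image_sub_le_of_norm_fderiv_le
    (fun z _ => hf z) hbound (Metric.mem_closedBall_self (norm_nonneg x))
    (show x + y ∈ Metric.closedBall y ‖x‖ by simp)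

theorem integrable_comp_add_of_lipschitzWith_fderiv [IsFiniteMeasure P]
    (hf : Differentiable ℝ f) (hf' : LipschitzWith K (fderiv ℝ f))
    (hX : AEStronglyMeasurable X P) (hfX : Integrable (fun ω => f (X ω)) P)
    (hf'X : Integrable (fun ω => fderiv ℝ f (X ω)) P) (x : E) :
    Integrable (fun ω => f (x + X ω)) P := by
  have hincrement : Integrable (fun ω => f (x + X ω) - f (X ω)) P :=
    ((hf'X.norm.add (integrable_const (K * ‖x‖))).mul_const ‖x‖).mono'
      ((hf.continuous.comp_aestronglyMeasurable (hX.const_add x)).sub hfX.aestronglyMeasurable)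
      (.of_forall fun ω => norm_apply_add_sub_le_of_lipschitzWith_fderiv hf hf' x (X ω))
  exact (hincrement.add hfX).congr (.of_forall fun ω => sub_add_cancel _ _)

theorem hasFDerivAt_integral_comp_add [IsFiniteMeasure P]
    (hf : Differentiable ℝ f) (hf' : LipschitzWith K (fderiv ℝ f))
    (hX : AEStronglyMeasurable X P) (hfX : Integrable (fun ω => f (X ω)) P)
    (hf'X : Integrable (fun ω => fderiv ℝ f (X ω)) P) (x : E) :
    HasFDerivAt (fun y => ∫ ω, f (y + X ω) ∂P) (∫ ω, fderiv ℝ f (x + X ω) ∂P) x := by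
  have hf'xX : Integrable (fun ω => fderiv ℝ f (x + X ω)) P :=
    integrable_comp_add_of_lipschitzWith hf' hX hf'X x
  have hdominated (ω : Ω) (y : E) (hy : y ∈ Metric.ball x 1) :
      ‖fderiv ℝ f (y + X ω)‖ ≤ ‖fderiv ℝ f (x + X ω)‖ + K := by
    have hyx : ‖y - x‖ ≤ 1 := (mem_ball_iff_norm.1 hy).le
    calc ‖fderiv ℝ f (y + X ω)‖
        ≤ ‖fderiv ℝ f (x + X ω)‖ + K * ‖y - x‖ := by
          simpa [← add_assoc] using norm_apply_add_le_of_lipschitzWith hf' (y - x) (x + X ω)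
      _ ≤ ‖fderiv ℝ f (x + X ω)‖ + K := by
          gcongr
          exact mul_le_of_le_one_right K.coe_nonneg hyx
  exact hasFDerivAt_integral_of_dominated_of_fderiv_le (Metric.ball_mem_nhds x one_pos)
    (.of_forall fun y => hf.continuous.comp_aestronglyMeasurable (hX.const_add y))
    (integrable_comp_add_of_lipschitzWith_fderiv hf hf' hX hfX hf'X x)
    hf'xX.aestronglyMeasurable (.of_forall hdominated) (hf'xX.norm.add (integrable_const _))
    (.of_forall fun ω y _ => (hasFDerivAt_comp_add_right (X ω)).2 (hf (y + X ω)).hasFDerivAt)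

theorem uniform_smoothing_is_L_smooth_general [IsProbabilityMeasure P] [CompleteSpace F]
    (hf : Differentiable ℝ f)
    (hlip : ∀ x y, ‖fderiv ℝ f x - fderiv ℝ f y‖ ≤ L * ‖x - y‖)
    (hX : AEStronglyMeasurable X P) (hfX : Integrable (fun ω => f (X ω)) P)
    (hf'X : Integrable (fun ω => fderiv ℝ f (X ω)) P) :
    Differentiable ℝ (fun x => ∫ ω, f (x + X ω) ∂P) ∧
      ∀ x y, ‖fderiv ℝ (fun x => ∫ ω, f (x + X ω) ∂P) x -
        fderiv ℝ (fun x => ∫ ω, f (x + X ω) ∂P) y‖ ≤ L * ‖x - y‖ := by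
  have hf' := lipschitzWith_toNNReal_of_norm_sub_le hlip
  have hderiv := hasFDerivAt_integral_comp_add hf hf' hX hfX hf'X
  refine ⟨fun x => (hderiv x).differentiableAt, fun x y => ?_⟩
  rw [(hderiv x).fderiv, (hderiv y).fderiv]
  exact norm_integral_comp_add_sub_le hlip
    (integrable_comp_add_of_lipschitzWith hf' hX hf'X) x y

end RandomTranslate

theorem norm_gradient_sub_gradient {𝕜 E : Type*} [RCLike 𝕜] [NormedAddCommGroup E]
    [InnerProductSpace 𝕜 E] [CompleteSpace E] (f : E → 𝕜) (x y : E) :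
    ‖gradient f x - gradient f y‖ = ‖fderiv 𝕜 f x - fderiv 𝕜 f y‖ := by
  rw [gradient, gradient, ← map_sub, LinearIsometryEquiv.norm_map]

instance isProbabilityMeasure_uniformBall (d : ℕ) : IsProbabilityMeasure (uniformBall d) :=
  cond_isProbabilityMeasure_of_finite (Metric.measure_closedBall_pos volume _ one_pos).ne'
    measure_closedBall_lt_top.ne

theorem integrable_uniformBall_of_continuous {F : Type*} [NormedAddCommGroup F] {d : ℕ}
    {g : EuclideanSpace ℝ (Fin d) → F} (hg : Continuous g) : Integrable g (uniformBall d) :=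
  (hg.continuousOn.integrableOn_compact (isCompact_closedBall 0 1)).smul_measure
    (ENNReal.inv_ne_top.2 (Metric.measure_closedBall_pos volume _ one_pos).ne')

/-- The uniform smoothing `f_μ` over the unit ball of an `L`-smooth function is differentiable
and `L`-smooth. -/
theorem uniform_smoothing_is_L_smooth
    (d : ℕ) (L μ : ℝ) (hμ : 0 < μ)
    (f : EuclideanSpace ℝ (Fin d) → ℝ)
    (hdiff : Differentiable ℝ f)
    (hlip : ∀ x y, ‖gradient f x - gradient f y‖ ≤ L * ‖x - y‖)
    (fμ : EuclideanSpace ℝ (Fin d) → ℝ)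
    (hfμ : ∀ x, fμ x = ∫ v, f (x + μ • v) ∂(uniformBall d)) :
    Differentiable ℝ fμ ∧ ∀ x y, ‖gradient fμ x - gradient fμ y‖ ≤ L * ‖x - y‖ := by
  obtain rfl : fμ = fun x => ∫ v, f (x + μ • v) ∂(uniformBall d) := funext hfμ
  simp only [norm_gradient_sub_gradient] at hlip ⊢
  have hf' : Continuous (fderiv ℝ f) := (lipschitzWith_toNNReal_of_norm_sub_le hlip).continuous
  have hf : Continuous f := hdiff.continuous
  exact uniform_smoothing_is_L_smooth_general hdiff hlip (by fun_prop)
    (integrable_uniformBall_of_continuous (by fun_prop))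
    (integrable_uniformBall_of_continuous (by fun_prop))
end
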